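/- arXiv:2506.02988 — 3 statements merged into one kernel-verified Lean document; each statement's English description precedes it below -/
import Mathlib

section
/- Let k ≥ 3. Then the set G of all (w, ℓ) ∈ T̄^PL_k such that for all coprime integers p, q with q ≥ 1, every b ∈ (0,1], and every ω ∈ ℝ, the q-th iterate of the map x ↦ x + ω + b·φ_{w,ℓ}(x) is not equal to x ↦ x + p, is a dense Gδ subset of T̄^PL_k with respect to the subspace topology inherited from ℝ^k × ℝ^k. (That is, the generic reduced standard-like piecewise linear forcing with k > 2 break points has no pinched rational Arnol'd tongues.) -/
/-- Membership in the space `T̄^PL_k` of reduced piecewise linear standard-like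
forcing data: lengths `ℓ_i > 0` summing to `1`, weights `w_i ≥ -1` with
`w_1 = -1`, adjacent weights distinct (indices mod `k`), and `∑ w_i ℓ_i = 0`. -/
def TPL (k : ℕ) (w l : Fin k → ℝ) : Prop :=
  (∀ i, 0 < l i) ∧ (∑ i, l i = 1) ∧ (∀ i, -1 ≤ w i) ∧
  (∀ h : 0 < k, w ⟨0, h⟩ = -1) ∧
  (∀ i : Fin k, w i ≠ w ⟨((i : ℕ) + 1) % k, Nat.mod_lt _ i.pos⟩) ∧
  (∑ i, w i * l i = 0)

/-- The cumulative break points `c_i = ℓ_1 + ⋯ + ℓ_i`. -/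
noncomputable def cum {k : ℕ} (l : Fin k → ℝ) (i : Fin k) : ℝ :=
  ∑ j ∈ Finset.Iic i, l j

/-- The 1-periodic continuous piecewise linear function `φ_{w,ℓ}` with
`φ_{w,ℓ}(0) = 0` and slope `w_i` on `[c_{i-1}, c_i]`. -/
noncomputable def phiWL {k : ℕ} (w l : Fin k → ℝ) (x : ℝ) : ℝ :=
  ∑ i : Fin k, w i *
    (min (Int.fract x) (cum l i) - min (Int.fract x) (cum l i - l i))

/-- The set of reduced PL data `(w, ℓ) ∈ T̄^PL_k` whose standard-like family has
no pinched rational Arnol'd tongue. -/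
def noPinchSet (k : ℕ) :
    Set {wl : (Fin k → ℝ) × (Fin k → ℝ) // TPL k wl.1 wl.2} :=
  {x | ∀ (p : ℤ) (q : ℕ), 1 ≤ q → Int.gcd p q = 1 →
    ∀ b ∈ Set.Ioc (0 : ℝ) 1, ∀ ω : ℝ,
      (fun y => y + ω + b * phiWL x.1.1 x.1.2 y)^[q] ≠ fun y => y + (p : ℝ)}


open Set Filter Topology

namespace PL

noncomputable def lft {k : ℕ} (l : Fin k → ℝ) (i : Fin k) : ℝ := cum l i - l i

noncomputable def G {k : ℕ} (w l : Fin k → ℝ) (z : ℝ) : ℝ :=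
  ∑ i : Fin k, w i * (min z (cum l i) - min z (cum l i - l i))

lemma lft_eq {k : ℕ} (l : Fin k → ℝ) (i : Fin k) : lft l i = ∑ j ∈ Finset.Iio i, l j := by
  unfold lft cum
  rw [← Finset.Iio_insert, Finset.sum_insert (by simp)]
  ring

lemma lft_zero {k : ℕ} (l : Fin k → ℝ) (h : 0 < k) : lft l ⟨0, h⟩ = 0 := by
  rw [lft_eq]
  apply Finset.sum_eq_zero
  intro j hj
  rw [Finset.mem_Iio] at hj
  exact absurd hj (by simp [Fin.lt_def])

lemma cum_last {k : ℕ} (l : Fin k → ℝ) (h : k - 1 < k) (hl : ∑ i, l i = 1) :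
    cum l ⟨k - 1, h⟩ = 1 := by
  rw [← hl]
  unfold cum
  congr 1
  ext j
  simp [Fin.le_def]
  omega

lemma lft_succ {k : ℕ} (l : Fin k → ℝ) (i : ℕ) (h : i + 1 < k) :
    lft l ⟨i + 1, h⟩ = cum l ⟨i, by omega⟩ := by
  rw [lft_eq]
  unfold cum
  congr 1
  ext j
  simp only [Finset.mem_Iio, Finset.mem_Iic, Fin.le_def, Fin.lt_def]
  omega

lemma lft_nonneg {k : ℕ} {l : Fin k → ℝ} (hl : ∀ i, 0 < l i) (i : Fin k) : 0 ≤ lft l i := by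
  rw [lft_eq]
  exact Finset.sum_nonneg fun j _ => (hl j).le

lemma cum_le_one {k : ℕ} {l : Fin k → ℝ} (hl : ∀ i, 0 < l i) (h1 : ∑ i, l i = 1) (i : Fin k) :
    cum l i ≤ 1 := by
  rw [← h1]
  exact Finset.sum_le_sum_of_subset_of_nonneg (Finset.subset_univ _) fun j _ _ => (hl j).le

lemma cum_eq {k : ℕ} (l : Fin k → ℝ) (i : Fin k) : cum l i = lft l i + l i := by
  unfold lft; ring

lemma cum_le_lft {k : ℕ} {l : Fin k → ℝ} (hl : ∀ i, 0 < l i) {i j : Fin k} (h : i < j) :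
    cum l i ≤ lft l j := by
  rw [lft_eq]
  unfold cum
  refine Finset.sum_le_sum_of_subset_of_nonneg ?_ fun j _ _ => (hl j).le
  intro a ha
  simp at ha ⊢
  exact lt_of_le_of_lt ha h

lemma G_affine {k : ℕ} {w l : Fin k → ℝ} (hl : ∀ i, 0 < l i) (i : Fin k) {x y : ℝ}
    (hx : x ∈ Icc (lft l i) (cum l i)) (hy : y ∈ Icc (lft l i) (cum l i)) :
    G w l y - G w l x = w i * (y - x) := by
  unfold G
  rw [← Finset.sum_sub_distrib, Finset.sum_eq_single i]
  · change w i * (min y (cum l i) - min y (lft l i)) - w i * (min x (cum l i) - min x (lft l i)) = _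
    rw [min_eq_left hx.2, min_eq_left hy.2, min_eq_right hx.1, min_eq_right hy.1]
    ring
  · intro j _ hj
    change w j * (min y (cum l j) - min y (lft l j)) - w j * (min x (cum l j) - min x (lft l j)) = _
    have hjj : lft l j ≤ cum l j := by rw [cum_eq]; linarith [hl j]
    rcases lt_or_gt_of_ne hj with h | h
    · have := cum_le_lft hl h
      rw [min_eq_right (this.trans hx.1), min_eq_right (this.trans hy.1),
        min_eq_right (hjj.trans (this.trans hx.1)), min_eq_right (hjj.trans (this.trans hy.1))]
      ring
    · have := cum_le_lft hl h
      rw [min_eq_left (hx.2.trans this), min_eq_left (hy.2.trans this),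
        min_eq_left (hx.2.trans (this.trans hjj)), min_eq_left (hy.2.trans (this.trans hjj))]
      ring
  · simp

lemma G_zero {k : ℕ} {w l : Fin k → ℝ} (hT : TPL k w l) : G w l 0 = 0 := by
  apply Finset.sum_eq_zero
  intro j _
  change w j * (min 0 (cum l j) - min 0 (lft l j)) = 0
  have h1 := lft_nonneg hT.1 j
  have h2 : 0 ≤ cum l j := by rw [cum_eq]; linarith [hT.1 j]
  rw [min_eq_left h1, min_eq_left h2]; ring

lemma G_one {k : ℕ} {w l : Fin k → ℝ} (hT : TPL k w l) : G w l 1 = 0 := by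
  rw [← hT.2.2.2.2.2]
  apply Finset.sum_congr rfl
  intro j _
  have h1 := cum_le_one hT.1 hT.2.1 j
  have h2 : cum l j - l j ≤ 1 := by linarith [hT.1 j]
  rw [min_eq_right h1, min_eq_right h2]; ring

lemma phi_eq {k : ℕ} {w l : Fin k → ℝ} (hT : TPL k w l) {z : ℝ} (hz : z ∈ Icc (0 : ℝ) 1) (m : ℤ) :
    phiWL w l (z + m) = G w l z := by
  change G w l (Int.fract (z + m)) = _
  rw [Int.fract_add_intCast]
  rcases eq_or_lt_of_le hz.2 with h | h
  · subst h
    rw [Int.fract_one, G_one hT, G_zero hT]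
  · rw [Int.fract_eq_self.2 ⟨hz.1, h⟩]

lemma exists_piece {k : ℕ} (hk : 0 < k) {l : Fin k → ℝ} (h1 : ∑ i, l i = 1)
    {z : ℝ} (hz : z ∈ Ico (0 : ℝ) 1) : ∃ i, lft l i ≤ z ∧ z < cum l i := by
  classical
  let s : Finset (Fin k) := Finset.univ.filter fun i => lft l i ≤ z
  have hs : s.Nonempty := ⟨⟨0, hk⟩, by simp [s, lft_zero, hz.1]⟩
  refine ⟨s.max' hs, ?_, ?_⟩
  · have := s.max'_mem hs
    simpa [s] using this
  · set i := s.max' hs with hi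
    by_cases hlast : (i : ℕ) + 1 < k
    · by_contra hcon
      push Not at hcon
      have hmem : (⟨i + 1, hlast⟩ : Fin k) ∈ s := by
        simp only [s, Finset.mem_filter, Finset.mem_univ, true_and]
        rw [lft_succ]; exact hcon
      have := s.le_max' _ hmem
      rw [← hi, Fin.le_def] at this
      simp at this
    · have : i = ⟨k - 1, by omega⟩ := by ext; simp; omega
      rw [this, cum_last l _ h1]
      exact hz.2

/-- the joint continuity -/
lemma continuous_phi (k : ℕ) {X : Type*} [TopologicalSpace X]
    {a : X → {wl : (Fin k → ℝ) × (Fin k → ℝ) // TPL k wl.1 wl.2}} (ha : Continuous a)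
    {s : X → ℝ} (hs : Continuous s) :
    Continuous fun x => phiWL (a x).1.1 (a x).1.2 (s x) := by
  change Continuous fun x => G (a x).1.1 (a x).1.2 (Int.fract (s x))
  refine ContinuousOn.comp_fract (f := fun x z => G (a x).1.1 (a x).1.2 z) ?_ hs ?_
  · apply Continuous.continuousOn
    unfold Function.uncurry G cum
    fun_prop
  · intro x
    rw [G_zero (a x).2, G_one (a x).2]

noncomputable def F {k : ℕ} (w l : Fin k → ℝ) (b ω : ℝ) (y : ℝ) : ℝ := y + ω + b * phiWL w l y

lemma continuous_F_iter (k : ℕ) (q : ℕ) {X : Type*} [TopologicalSpace X]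
    {a : X → {wl : (Fin k → ℝ) × (Fin k → ℝ) // TPL k wl.1 wl.2}} (ha : Continuous a)
    {s b ω : X → ℝ} (hs : Continuous s) (hb : Continuous b) (hω : Continuous ω) :
    Continuous fun x => (F (a x).1.1 (a x).1.2 (b x) (ω x))^[q] (s x) := by
  induction q with
  | zero => simpa using hs
  | succ n ih =>
    simp only [Function.iterate_succ_apply']
    have := continuous_phi k ha ih
    unfold F at this ⊢
    have h2 := (ih.add hω).add (hb.mul this)
    exact h2

def badSet (k : ℕ) (p : ℤ) (q n m : ℕ) :
    Set {wl : (Fin k → ℝ) × (Fin k → ℝ) // TPL k wl.1 wl.2} :=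
  {x | ∃ b ∈ Icc (1 / ((n : ℝ) + 1)) 1, ∃ ω ∈ Icc (-(m : ℝ)) m,
    ∀ y, (F x.1.1 x.1.2 b ω)^[q] y = y + p}

lemma isClosed_badSet (k : ℕ) (p : ℤ) (q n m : ℕ) : IsClosed (badSet k p q n m) := by
  let Z := (Icc (1 / ((n : ℝ) + 1)) 1) × (Icc (-(m : ℝ)) m)
  let A : Set (Z × {wl : (Fin k → ℝ) × (Fin k → ℝ) // TPL k wl.1 wl.2}) :=
    {t | ∀ y, (F t.2.1.1 t.2.1.2 t.1.1 t.1.2)^[q] y = y + p}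
  have hA : IsClosed A := by
    simp only [A, ofPred_forall]
    refine isClosed_iInter fun y => isClosed_eq ?_ continuous_const
    exact continuous_F_iter k q continuous_snd continuous_const
      (continuous_subtype_val.comp (continuous_fst.comp continuous_fst))
      (continuous_subtype_val.comp (continuous_snd.comp continuous_fst))
  have : badSet k p q n m = Prod.snd '' A := by
    ext x
    constructor
    · rintro ⟨b, hb, ω, hω, h⟩
      exact ⟨((⟨b, hb⟩, ⟨ω, hω⟩), x), h, rfl⟩
    · rintro ⟨⟨⟨b, ω⟩, x'⟩, h, rfl⟩
      exact ⟨b, b.2, ω, ω.2, h⟩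
  rw [this]
  exact isClosedMap_snd_of_compactSpace _ hA

lemma isGδ_noPinch (k : ℕ) : IsGδ (noPinchSet k) := by
  have : noPinchSet k = ⋂ (t : {t : ℤ × ℕ // 1 ≤ t.2 ∧ Int.gcd t.1 t.2 = 1} × ℕ × ℕ),
      (badSet k t.1.1.1 t.1.1.2 t.2.1 t.2.2)ᶜ := by
    ext x
    simp only [mem_iInter]
    constructor
    · rintro h ⟨⟨⟨p, q⟩, hq, hg⟩, n, m⟩ ⟨b, hb, ω, hω, hf⟩
      refine h p q hq hg b ⟨lt_of_lt_of_le (by positivity) hb.1, hb.2⟩ ω ?_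
      funext y
      exact hf y
    · intro h p q hq hg b hb ω hf
      obtain ⟨n, hn⟩ := exists_nat_one_div_lt hb.1
      obtain ⟨m, hm⟩ := exists_nat_ge |ω|
      refine h ⟨⟨⟨p, q⟩, hq, hg⟩, n, m⟩ ⟨b, ⟨hn.le, hb.2⟩, ω, abs_le.1 hm, fun y => ?_⟩
      exact congrFun hf y
  rw [this]
  exact IsGδ.iInter_of_isOpen fun t => (isClosed_badSet _ _ _ _ _).isOpen_compl

noncomputable abbrev K : IntermediateField ℚ ℝ := algebraicClosure ℚ ℝ

lemma mem_K {x : ℝ} : x ∈ K ↔ IsAlgebraic ℚ x := mem_algebraicClosure_iff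

def Br {k : ℕ} (l : Fin k → ℝ) : Set ℝ := {x | ∃ (i : Fin k) (m : ℤ), x = lft l i + m}

section dyn

variable {k : ℕ} {w l : Fin k → ℝ} {b ω : ℝ}

lemma F_affine (hT : TPL k w l) (i : Fin k) (m : ℤ) {x y : ℝ}
    (hx : x ∈ Icc (lft l i + m) (cum l i + m)) (hy : y ∈ Icc (lft l i + m) (cum l i + m)) :
    F w l b ω y - F w l b ω x = (1 + b * w i) * (y - x) := by
  have key : ∀ z ∈ Icc (lft l i + (m : ℝ)) (cum l i + m),
      z - m ∈ Icc (lft l i) (cum l i) ∧ phiWL w l z = G w l (z - m) := by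
    intro z hz
    have h1 : z - m ∈ Icc (lft l i) (cum l i) := ⟨by linarith [hz.1], by linarith [hz.2]⟩
    refine ⟨h1, ?_⟩
    rw [← phi_eq hT (z := z - m) ⟨(lft_nonneg hT.1 i).trans h1.1,
      h1.2.trans (cum_le_one hT.1 hT.2.1 i)⟩ m]
    congr 1; ring
  obtain ⟨hx1, hx2⟩ := key x hx
  obtain ⟨hy1, hy2⟩ := key y hy
  have := G_affine (w := w) hT.1 i hx1 hy1
  unfold F
  rw [hx2, hy2]
  linear_combination b * this

lemma F_add_int (x : ℝ) (m : ℤ) : F w l b ω (x + m) = F w l b ω x + m := by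
  unfold F phiWL
  rw [Int.fract_add_intCast]
  ring

lemma F_iter_add_int (n : ℕ) (x : ℝ) (m : ℤ) :
    (F w l b ω)^[n] (x + m) = (F w l b ω)^[n] x + m := by
  induction n with
  | zero => rfl
  | succ n ih => rw [Function.iterate_succ_apply', ih, F_add_int, Function.iterate_succ_apply']

lemma F_continuous (hT : TPL k w l) : Continuous (F w l b ω) := by
  have := continuous_phi k (X := ℝ) (a := fun _ => ⟨(w, l), hT⟩) continuous_const continuous_id
  unfold F
  simp only [id] at this
  fun_prop

lemma right_piece (hk : 0 < k) (hT : TPL k w l) (x : ℝ) :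
    ∃ (i : Fin k) (m : ℤ), lft l i + m ≤ x ∧ x < cum l i + m := by
  obtain ⟨i, h1, h2⟩ := exists_piece hk hT.2.1 (z := Int.fract x)
    ⟨Int.fract_nonneg x, Int.fract_lt_one x⟩
  refine ⟨i, ⌊x⌋, ?_, ?_⟩ <;> · have := Int.floor_add_fract x; linarith

lemma left_piece (hk : 0 < k) (hT : TPL k w l) (i : Fin k) (m : ℤ) :
    ∃ (j : Fin k) (m' : ℤ), w j ≠ w i ∧ lft l i + m = cum l j + m' := by
  obtain ⟨i, hi⟩ := i
  rcases i with _ | i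
  · refine ⟨⟨k - 1, by omega⟩, m - 1, ?_, ?_⟩
    · have := hT.2.2.2.2.1 ⟨k - 1, by omega⟩
      convert this using 3
      simp [Nat.sub_add_cancel hk]
    · rw [lft_zero, cum_last l _ hT.2.1]; push_cast; ring
  · refine ⟨⟨i, by omega⟩, m, ?_, ?_⟩
    · have := hT.2.2.2.2.1 ⟨i, by omega⟩
      convert this using 3
      simp [Nat.mod_eq_of_lt hi]
    · rw [lft_succ]

lemma deriv_right (hT : TPL k w l) (i : Fin k) (m : ℤ) {x : ℝ}
    (h1 : lft l i + m ≤ x) (h2 : x < cum l i + m) :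
    HasDerivWithinAt (F w l b ω) (1 + b * w i) (Ici x) x := by
  have h : HasDerivWithinAt (fun y => F w l b ω x + (1 + b * w i) * (y - x))
      (1 + b * w i) (Ici x) x := by
    have := (((hasDerivAt_id x).sub_const x).const_mul (1 + b * w i)).const_add (F w l b ω x)
    simpa using this.hasDerivWithinAt
  refine h.congr_of_eventuallyEq ?_ (by simp)
  filter_upwards [Icc_mem_nhdsGE h2] with y hy
  have := F_affine (b := b) (ω := ω) hT i m (x := x) (y := y) ⟨h1, h2.le⟩ ⟨h1.trans hy.1, hy.2⟩
  linarith

lemma deriv_left (hT : TPL k w l) (i : Fin k) (m : ℤ) {x : ℝ}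
    (h1 : lft l i + m < x) (h2 : x ≤ cum l i + m) :
    HasDerivWithinAt (F w l b ω) (1 + b * w i) (Iic x) x := by
  have h : HasDerivWithinAt (fun y => F w l b ω x + (1 + b * w i) * (y - x))
      (1 + b * w i) (Iic x) x := by
    have := (((hasDerivAt_id x).sub_const x).const_mul (1 + b * w i)).const_add (F w l b ω x)
    simpa using this.hasDerivWithinAt
  refine h.congr_of_eventuallyEq ?_ (by simp)
  filter_upwards [Icc_mem_nhdsLE h1] with y hy
  have := F_affine (b := b) (ω := ω) hT i m (x := x) (y := y) ⟨h1.le, h2⟩ ⟨hy.1, hy.2.trans h2⟩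
  linarith

lemma slopes (hk : 0 < k) (hT : TPL k w l) (b ω : ℝ) (x : ℝ) : ∃ i j : Fin k,
    HasDerivWithinAt (F w l b ω) (1 + b * w i) (Ici x) x ∧
    HasDerivWithinAt (F w l b ω) (1 + b * w j) (Iic x) x ∧
    (x ∉ Br l → i = j) ∧ (x ∈ Br l → w i ≠ w j) := by
  by_cases hx : x ∈ Br l
  · obtain ⟨i, m, rfl⟩ := id hx
    obtain ⟨j, m', hj, he⟩ := left_piece hk hT i m
    refine ⟨i, j, ?_, ?_, fun h => absurd hx h, fun _ => hj.symm⟩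
    · exact deriv_right hT i m le_rfl (by rw [cum_eq]; linarith [hT.1 i])
    · exact deriv_left hT j m' (by rw [he, cum_eq]; linarith [hT.1 j]) he.le
  · obtain ⟨i, m, h1, h2⟩ := right_piece hk hT x
    have h1' : lft l i + m < x := lt_of_le_of_ne h1 fun h => hx ⟨i, m, h.symm⟩
    exact ⟨i, i, deriv_right hT i m h1 h2, deriv_left hT i m h1' h2.le, fun _ => rfl,
      fun h => absurd h hx⟩

lemma affine_off_Br (hk : 0 < k) (hT : TPL k w l) {u v : ℝ} (huv : u < v)
    (h : ∀ x ∈ Ioo u v, x ∉ Br l) :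
    ∃ i : Fin k, F w l b ω v - F w l b ω u = (1 + b * w i) * (v - u) := by
  obtain ⟨i, m, h1, h2⟩ := right_piece hk hT u
  refine ⟨i, F_affine hT i m ⟨h1, h2.le⟩ ⟨h1.trans huv.le, ?_⟩⟩
  by_contra hc
  push Not at hc
  refine h _ ⟨h2, hc⟩ ?_
  rcases lt_or_ge ((i : ℕ) + 1) k with hi | hi
  · exact ⟨⟨i + 1, hi⟩, m, by rw [lft_succ]⟩
  · refine ⟨⟨0, hk⟩, m + 1, ?_⟩
    have : i = ⟨k - 1, by omega⟩ := by ext; simp; omega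
    rw [this, lft_zero, cum_last l _ hT.2.1]; push_cast; ring

lemma chain_right {f : ℝ → ℝ} (hf : Monotone f) {R : ℝ → ℝ}
    (hR : ∀ x, HasDerivWithinAt f (R x) (Ici x) x) (n : ℕ) (x : ℝ) :
    HasDerivWithinAt (f^[n]) (∏ j ∈ Finset.range n, R (f^[j] x)) (Ici x) x := by
  induction n with
  | zero => simpa using hasDerivWithinAt_id x (Ici x)
  | succ n ih =>
    rw [Finset.prod_range_succ, mul_comm, Function.iterate_succ']
    exact HasDerivWithinAt.comp x (hR (f^[n] x)) ih (fun y hy => (hf.iterate n) hy)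

lemma chain_left {f : ℝ → ℝ} (hf : Monotone f) {R : ℝ → ℝ}
    (hR : ∀ x, HasDerivWithinAt f (R x) (Iic x) x) (n : ℕ) (x : ℝ) :
    HasDerivWithinAt (f^[n]) (∏ j ∈ Finset.range n, R (f^[j] x)) (Iic x) x := by
  induction n with
  | zero => simpa using hasDerivWithinAt_id x (Iic x)
  | succ n ih =>
    rw [Finset.prod_range_succ, mul_comm, Function.iterate_succ']
    exact HasDerivWithinAt.comp x (hR (f^[n] x)) ih (fun y hy => (hf.iterate n) hy)

lemma b_alg (hw : ∀ i, ∃ r : ℚ, w i = r) (N : ℕ) (i : ℕ → Fin k)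
    (h : (∏ n ∈ Finset.range N, (1 + b * w (i n))) * (1 - b) = 1) : b ∈ K := by
  choose r hr using hw
  rw [mem_K]
  refine ⟨(∏ n ∈ Finset.range N, (1 + Polynomial.X * Polynomial.C (r (i n)))) * (1 - Polynomial.X)
    - 1, ?_, ?_⟩
  · intro h0
    have := congrArg (Polynomial.eval 1) h0
    simp at this
  · simp [map_prod]
    simp only [hr, mul_comm b] at h
    linarith

/-- gap lemma -/
lemma gap (W : Submodule K ℝ) (H : ℝ → ℝ) (a e : ℝ) (S : Finset ℝ)
    (hS : ∀ u v, a ≤ u → u < v → v ≤ e → (∀ x ∈ Ioo u v, x ∉ S) →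
      ∃ s : K, s ≠ 0 ∧ H v - H u = s * (v - u))
    (hW : ∀ x ∈ S, H x - H a ∈ W) :
    ∀ (n : ℕ) (x : ℝ), (S.filter (fun y => y ∈ Ioo a x)).card = n → a ≤ x → x ≤ e →
      H x - H a ∈ W → x - a ∈ W := by
  intro n
  induction n using Nat.strong_induction_on with
  | _ n ih =>
  intro x hn hax hxe hx
  have scale : ∀ (s : K) (d z : ℝ), s ≠ 0 → z = s * d → z ∈ W → d ∈ W := by
    intro s d z hs hz hzW
    have h2 := W.smul_mem s⁻¹ hzW
    have : s⁻¹ • z = d := by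
      rw [hz, ← smul_eq_mul, ← IntermediateField.smul_def, smul_smul, inv_mul_cancel₀ hs, one_smul]
    rwa [this] at h2
  rcases hax.eq_or_lt with rfl | hax
  · simp
  rcases (S.filter (fun y => y ∈ Ioo a x)).eq_empty_or_nonempty with h0 | hne
  · obtain ⟨s, hs, he⟩ := hS a x le_rfl hax hxe (fun y hy hyS => by
      have : y ∈ S.filter (fun y => y ∈ Ioo a x) := Finset.mem_filter.2 ⟨hyS, hy⟩
      rw [h0] at this; simp at this)
    exact scale s _ _ hs he hx
  · set β := (S.filter (fun y => y ∈ Ioo a x)).max' hne with hβ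
    have hβm := Finset.max'_mem _ hne
    rw [← hβ, Finset.mem_filter] at hβm
    obtain ⟨hβS, hβ1, hβ2⟩ := hβm
    obtain ⟨s, hs, he⟩ := hS β x hβ1.le hβ2 hxe (fun y hy hyS => by
      have : y ∈ S.filter (fun y => y ∈ Ioo a x) :=
        Finset.mem_filter.2 ⟨hyS, hβ1.trans hy.1, hy.2⟩
      exact absurd (Finset.le_max' _ _ this) (not_le.2 hy.1))
    have hβW := hW β hβS
    have h1 : x - β ∈ W := scale s _ _ hs he (by
      have := W.sub_mem hx hβW
      convert this using 1; ring)
    have h2 : β - a ∈ W := by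
      refine ih _ ?_ β rfl hβ1.le (hβ2.le.trans hxe) hβW
      rw [← hn]
      apply Finset.card_lt_card
      refine Finset.ssubset_iff_subset_ne.2 ⟨?_, ?_⟩
      · intro y hy
        rw [Finset.mem_filter] at hy ⊢
        exact ⟨hy.1, hy.2.1, hy.2.2.trans hβ2⟩
      · intro hEq
        have : β ∈ S.filter (fun y => y ∈ Ioo a β) := by
          rw [hEq, Finset.mem_filter]; exact ⟨hβS, hβ1, hβ2⟩
        rw [Finset.mem_filter] at this
        exact lt_irrefl _ this.2.2
    have := W.add_mem h1 h2
    convert this using 1; ring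

end dyn

noncomputable abbrev Q1 : Submodule K ℝ := Submodule.span K {(1 : ℝ)}

lemma intCast_mem (m : ℤ) : Q1.mkQ (m : ℝ) = 0 := by
  rw [Submodule.mkQ_apply, Submodule.Quotient.mk_eq_zero]
  refine Submodule.mem_span_singleton.2 ⟨(m : K), ?_⟩
  rw [IntermediateField.smul_def]; simp

lemma dim_count {E : Type*} [AddCommGroup E] [Module K E] {k : ℕ} (hk : 3 ≤ k) (hb : Fin k → E)
    (i0 j0 : Fin k) (h0 : hb i0 = 0) (hpair : ∀ i, ∃ j, j ≠ i ∧ hb j = hb i)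
    (t : {i : Fin k // i ≠ i0 ∧ i ≠ j0} → E) (ht : LinearIndependent K t)
    (hmem : ∀ i, t i ∈ Submodule.span K (range hb)) : False := by
  classical
  set I : Finset E := Finset.univ.image hb with hI
  have hcard : 2 * I.card ≤ k := by
    have := Finset.mul_card_image_le_card (f := hb) Finset.univ 2 (by
      intro x hx
      obtain ⟨i, -, rfl⟩ := Finset.mem_image.1 hx
      obtain ⟨j, hj, he⟩ := hpair i
      rw [← Finset.card_pair hj]
      apply Finset.card_le_card
      intro a ha
      rcases Finset.mem_insert.1 ha with rfl | ha
      · simp [he]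
      · simp [Finset.mem_singleton.1 ha])
    simpa using this
  have h0I : (0 : E) ∈ I := Finset.mem_image.2 ⟨i0, Finset.mem_univ _, h0⟩
  have hspan : Submodule.span K (range hb) = Submodule.span K ((I.erase 0 : Finset E) : Set E) := by
    rw [Finset.coe_erase, Submodule.span_sdiff_singleton_zero, hI]
    simp
  have hle : Fintype.card {i : Fin k // i ≠ i0 ∧ i ≠ j0} ≤ (I.erase 0).card := by
    have h1 : Submodule.span K (range t) ≤ Submodule.span K ((I.erase 0 : Finset E) : Set E) := by
      rw [Submodule.span_le]
      rintro _ ⟨i, rfl⟩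
      rw [← hspan]; exact hmem i
    have h2 := finrank_span_eq_card ht
    have h3 : (((I.erase 0 : Finset E) : Set E)).finrank K ≤ _ :=
      finrank_span_finset_le_card (R := K) (I.erase 0)
    rw [← h2]
    exact (Submodule.finrank_mono h1).trans h3
  rw [Finset.card_erase_of_mem h0I] at hle
  have hc : k - 2 ≤ Fintype.card {i : Fin k // i ≠ i0 ∧ i ≠ j0} := by
    rw [Fintype.card_subtype]
    have : Finset.univ.filter (fun i : Fin k => i ≠ i0 ∧ i ≠ j0) = Finset.univ \ {i0, j0} := by
      ext; simp
    rw [this]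
    have h5 := Finset.le_card_sdiff {i0, j0} (Finset.univ : Finset (Fin k))
    have h6 : ({i0, j0} : Finset (Fin k)).card ≤ 2 := Finset.card_le_two
    simp only [Finset.card_univ, Fintype.card_fin] at h5
    omega
  have : 0 < I.card := Finset.card_pos.2 ⟨0, h0I⟩
  omega

lemma noPinch_of_good {k : ℕ} (hk : 3 ≤ k) {w l : Fin k → ℝ} (hT : TPL k w l)
    (hw : ∀ i, ∃ r : ℚ, w i = r) (j0 : Fin k)
    (hind : LinearIndependent K
      (fun i : {i : Fin k // i ≠ ⟨0, by omega⟩ ∧ i ≠ j0} => Q1.mkQ (l i)))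
    (p : ℤ) (q : ℕ) (hq : 1 ≤ q) (hg : Int.gcd p q = 1) (b ω : ℝ) (hb0 : b ≠ 0)
    (hf : ∀ y, (F w l b ω)^[q] y = y + p) : False := by
  have hk0 : 0 < k := by omega
  have hcont : Continuous (F w l b ω) := F_continuous hT
  have hintadd := F_iter_add_int (w := w) (l := l) (b := b) (ω := ω)
  have haff := fun i m x y => F_affine (b := b) (ω := ω) hT i m (x := x) (y := y)
  have hsl := slopes hk0 hT b ω
  have hoff := fun u v => affine_off_Br (b := b) (ω := ω) hk0 hT (u := u) (v := v)
  have hd0 := deriv_right (b := b) (ω := ω) hT ⟨0, hk0⟩ 0 (x := 0) (by simp [lft_zero])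
    (by rw [cum_eq, lft_zero]; simpa using hT.1 _)
  rw [hT.2.2.2.1 hk0] at hd0
  generalize F w l b ω = f at *
  have hinj : Function.Injective f := by
    intro x y hxy
    have h1 := hf x
    have h2 := hf y
    obtain ⟨q', rfl⟩ : ∃ q', q = q' + 1 := ⟨q - 1, by omega⟩
    rw [Function.iterate_succ_apply] at h1 h2
    rw [hxy] at h1
    linarith
  have hmono : StrictMono f := by
    rcases hcont.strictMono_of_inj hinj with h | h
    · exact h
    · have h1 := h (show (0 : ℝ) < 0 + (1 : ℤ) by norm_num)
      have h2 := hintadd 1 0 1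
      simp only [Function.iterate_one] at h2
      rw [h2] at h1
      push_cast at h1
      linarith
  have ha : ∀ i, 1 + b * w i ≠ 0 := by
    intro i h0
    have hlt : lft l i < cum l i := by rw [cum_eq]; linarith [hT.1 i]
    have h1 := haff i 0 (lft l i) (cum l i) (by simpa using hlt.le) (by simpa using hlt.le)
    rw [h0, zero_mul] at h1
    have := hinj (sub_eq_zero.1 h1)
    linarith
  choose r s hr hs hrs hne using hsl
  have hprodR : ∀ x, ∏ j ∈ Finset.range q, (1 + b * w (r (f^[j] x))) = 1 := by
    intro x
    have h1 := chain_right hmono.monotone hr q x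
    have h2 : HasDerivWithinAt (f^[q]) 1 (Ici x) x := by
      rw [show f^[q] = fun y => y + (p : ℝ) from funext hf]
      exact (hasDerivWithinAt_id x _).add_const _
    exact (uniqueDiffOn_Ici x x self_mem_Ici).eq_deriv _ h1 h2
  have hprodL : ∀ x, ∏ j ∈ Finset.range q, (1 + b * w (s (f^[j] x))) = 1 := by
    intro x
    have h1 := chain_left hmono.monotone hs q x
    have h2 : HasDerivWithinAt (f^[q]) 1 (Iic x) x := by
      rw [show f^[q] = fun y => y + (p : ℝ) from funext hf]
      exact (hasDerivWithinAt_id x _).add_const _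
    exact (uniqueDiffOn_Iic x x self_mem_Iic).eq_deriv _ h1 h2
  obtain ⟨q', hq'⟩ : ∃ q', q = q' + 1 := ⟨q - 1, by omega⟩
  have hbK : b ∈ K := by
    have h1 := hprodR 0
    rw [hq', Finset.prod_range_succ'] at h1
    have h2 : 1 + b * w (r (f^[0] 0)) = 1 - b := by
      have := (uniqueDiffOn_Ici (0 : ℝ) 0 self_mem_Ici).eq_deriv _ (hr 0) hd0
      simp only [Function.iterate_zero, id]
      rw [this]; ring
    rw [h2] at h1
    exact b_alg hw q' (fun n => r (f^[n + 1] 0)) h1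
  have haK : ∀ i, 1 + b * w i ∈ K := by
    intro i
    obtain ⟨t, ht⟩ := hw i
    rw [ht]
    exact K.add_mem K.one_mem (K.mul_mem hbK (K.algebraMap_mem t))
  -- the conjugacy
  set H : ℝ → ℝ := fun x => ∑ j ∈ Finset.range q, f^[j] x with hH
  have Hf : ∀ x, H (f x) = H x + p := by
    intro x
    have h1 := Finset.sum_range_succ (fun j => f^[j] x) q
    have h2 := Finset.sum_range_succ' (fun j => f^[j] x) q
    rw [h1] at h2
    simp only [hf, Function.iterate_succ_apply, Function.iterate_zero, id] at h2
    simp only [hH]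
    linarith
  have Hn : ∀ n x, H (f^[n] x) = H x + n * p := by
    intro n
    induction n with
    | zero => intro x; simp
    | succ n ih => intro x; rw [Function.iterate_succ_apply, ih, Hf]; push_cast; ring
  have Hint : ∀ x (m : ℤ), H (x + m) = H x + q * m := by
    intro x m
    simp only [hH, hintadd, Finset.sum_add_distrib, Finset.sum_const, Finset.card_range,
      nsmul_eq_mul]
  have hcl : ∀ n x i (m : ℤ), f^[n] x = lft l i + m →
      Q1.mkQ (H x - H 0) = Q1.mkQ (H (lft l i) - H 0) := by
    intro n x i m h
    have h1 := Hn n x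
    rw [h, Hint] at h1
    have h2 : H x - H 0 = (H (lft l i) - H 0) + ((q * m - n * p : ℤ) : ℝ) := by
      push_cast; linarith
    rw [h2, map_add, intCast_mem, add_zero]
  have hpair : ∀ i, ∃ j, j ≠ i ∧ Q1.mkQ (H (lft l j) - H 0) = Q1.mkQ (H (lft l i) - H 0) := by
    intro i
    have hex : ∃ n < q', f^[n + 1] (lft l i) ∈ Br l := by
      by_contra hcon
      push Not at hcon
      have h1 := (hprodR (lft l i)).trans (hprodL (lft l i)).symm
      rw [hq', Finset.prod_range_succ', Finset.prod_range_succ'] at h1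
      have h3 : ∏ n ∈ Finset.range q', (1 + b * w (r (f^[n + 1] (lft l i)))) =
          ∏ n ∈ Finset.range q', (1 + b * w (s (f^[n + 1] (lft l i)))) := by
        refine Finset.prod_congr rfl fun n hn => ?_
        rw [hrs _ (hcon n (Finset.mem_range.1 hn))]
      rw [h3] at h1
      have h4 := mul_left_cancel₀ (Finset.prod_ne_zero_iff.2 fun n _ => ha _) h1
      simp only [Function.iterate_zero, id, add_right_inj] at h4
      have hBr : lft l i ∈ Br l := ⟨i, 0, by simp⟩
      rcases mul_eq_mul_left_iff.1 h4 with h5 | h5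
      · exact hne _ hBr h5
      · exact hb0 h5
    obtain ⟨n, hn, j, m, hj⟩ := hex
    refine ⟨j, ?_, (hcl _ _ _ _ hj).symm⟩
    rintro rfl
    have h1 := Hn (n + 1) (lft l j)
    rw [hj, Hint] at h1
    have h2 : (q : ℤ) * m = ((n + 1 : ℕ) : ℤ) * p := by
      have : (q : ℝ) * m = ((n + 1 : ℕ) : ℝ) * p := by linarith
      exact_mod_cast this
    have h3 : (q : ℤ) ∣ ((n + 1 : ℕ) : ℤ) := by
      have hcop : IsCoprime (q : ℤ) p := by
        rw [Int.isCoprime_iff_gcd_eq_one, Int.gcd_comm]; exact hg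
      exact hcop.dvd_of_dvd_mul_right ⟨m, h2.symm⟩
    have h4 := Nat.le_of_dvd (by omega) (Int.natCast_dvd_natCast.1 h3)
    omega
  -- the submodule
  set V := Submodule.span K (range fun i => Q1.mkQ (H (lft l i) - H 0)) with hV
  set W : Submodule K ℝ := V.comap Q1.mkQ with hW
  have hbreak : ∀ n x, f^[n] x ∈ Br l → H x - H 0 ∈ W := by
    rintro n x ⟨i, m, h⟩
    rw [hW, Submodule.mem_comap, hcl n x i m h]
    exact Submodule.subset_span ⟨i, rfl⟩
  have hBrfin : ∀ a c : ℝ, (Br l ∩ Icc a c).Finite := by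
    intro a c
    have : Br l ∩ Icc a c ⊆ ⋃ i : Fin k, (fun m : ℤ => lft l i + m) ''
        (Icc (⌊a - lft l i⌋) (⌈c - lft l i⌉)) := by
      rintro x ⟨⟨i, m, rfl⟩, h1, h2⟩
      refine mem_iUnion.2 ⟨i, m, ⟨?_, ?_⟩, rfl⟩
      · exact Int.floor_le_iff.2 (by linarith)
      · exact Int.le_ceil_iff.2 (by linarith)
    exact (finite_iUnion fun i => (finite_Icc _ _).image _).subset this
  have hSfin : {x | x ∈ Icc (0 : ℝ) 1 ∧ ∃ n < q, f^[n] x ∈ Br l}.Finite := by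
    have : {x | x ∈ Icc (0 : ℝ) 1 ∧ ∃ n < q, f^[n] x ∈ Br l} ⊆
        ⋃ n ∈ Finset.range q, f^[n] ⁻¹' (Br l ∩ Icc (f^[n] 0) (f^[n] 1)) := by
      rintro x ⟨hx, n, hn, hxn⟩
      simp only [mem_iUnion, Finset.mem_range]
      exact ⟨n, hn, hxn, (hmono.iterate n).monotone hx.1, (hmono.iterate n).monotone hx.2⟩
    refine Finite.subset (Finite.biUnion (Finset.finite_toSet _) fun n _ => ?_) this
    exact (hBrfin _ _).preimage (hinj.iterate n).injOn
  have hgap := gap W H 0 1 hSfin.toFinset (by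
    intro u v hu huv hv hS
    have key : ∀ n ≤ q, ∃ t : K, t.1 ≠ 0 ∧ f^[n] v - f^[n] u = t * (v - u) := by
      intro n
      induction n with
      | zero => intro _; exact ⟨1, by simp, by simp⟩
      | succ n ih =>
        intro hn
        obtain ⟨t, ht, he⟩ := ih (by omega)
        obtain ⟨i, hi⟩ := hoff (f^[n] u) (f^[n] v) (hmono.iterate n huv) (by
          intro y hy hyB
          obtain ⟨x, hx, rfl⟩ := intermediate_value_Ioo huv.le (hcont.iterate n).continuousOn hy
          refine hS x hx (hSfin.mem_toFinset.2 ⟨⟨hu.trans hx.1.le, hx.2.le.trans hv⟩,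
            n, by omega, hyB⟩))
        refine ⟨⟨1 + b * w i, haK i⟩ * t, mul_ne_zero (ha i) ht, ?_⟩
        rw [Function.iterate_succ_apply', Function.iterate_succ_apply', hi, he]
        simp [mul_assoc]
    have hpos : ∀ n, 0 < f^[n] v - f^[n] u := fun n => sub_pos.2 (hmono.iterate n huv)
    have hkey : ∀ n, ∃ t : K, n < q → f^[n] v - f^[n] u = t * (v - u) := by
      intro n
      by_cases hn : n < q
      · obtain ⟨t, -, h⟩ := key n hn.le
        exact ⟨t, fun _ => h⟩
      · exact ⟨0, fun h => absurd h hn⟩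
    choose t ht using hkey
    have hHd : H v - H u = ((∑ n ∈ Finset.range q, t n : K) : ℝ) * (v - u) := by
      simp only [hH]
      rw [← Finset.sum_sub_distrib]
      push_cast
      rw [Finset.sum_mul]
      exact Finset.sum_congr rfl fun n hn => ht n (Finset.mem_range.1 hn)
    refine ⟨∑ n ∈ Finset.range q, t n, ?_, hHd⟩
    intro h0
    rw [h0] at hHd
    have : 0 < H v - H u := by
      simp only [hH]
      rw [← Finset.sum_sub_distrib]
      exact Finset.sum_pos (fun n _ => hpos n) ⟨0, Finset.mem_range.2 (by omega)⟩
    rw [hHd] at this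
    simp at this) (by
    intro x hx
    obtain ⟨-, n, -, h⟩ := hSfin.mem_toFinset.1 hx
    exact hbreak n x h)
  have hlft : ∀ i, lft l i ∈ W := by
    intro i
    have h0 := lft_nonneg hT.1 i
    have h1 := cum_le_one hT.1 hT.2.1 i
    have := hgap _ (lft l i) rfl h0 (by rw [cum_eq] at h1; linarith [hT.1 i])
      (hbreak 0 _ ⟨i, 0, by simp⟩)
    simpa using this
  have hone : (1 : ℝ) ∈ W := by
    rw [hW, Submodule.mem_comap]
    have := intCast_mem 1
    rw [Int.cast_one] at this
    rw [this]; exact V.zero_mem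
  have hlW : ∀ i, l i ∈ W := by
    intro i
    have hcum : cum l i ∈ W := by
      rcases lt_or_ge ((i : ℕ) + 1) k with hi | hi
      · have := hlft ⟨i + 1, hi⟩
        rwa [lft_succ] at this
      · have : i = ⟨k - 1, by omega⟩ := by ext; simp; omega
        rw [this, cum_last l _ hT.2.1]; exact hone
    have := W.sub_mem hcum (hlft i)
    rwa [cum_eq, add_sub_cancel_left] at this
  exact dim_count hk (fun i => Q1.mkQ (H (lft l i) - H 0)) ⟨0, hk0⟩ j0
    (by simp [lft_zero]) hpair _ hind (fun i => hlW i)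

lemma exists_indep (k : ℕ) : ∃ e : Fin k → ℝ, LinearIndependent K (fun i => Q1.mkQ (e i)) := by
  have hnf : ¬ Module.Finite K (ℝ ⧸ Q1) := by
    intro h
    have h1 : Module.Finite K ℝ := Module.Finite.of_submodule_quotient Q1
    have hKc : Countable K := by
      have := Algebraic.countable ℚ ℝ
      have h2 : ((K : IntermediateField ℚ ℝ) : Set ℝ).Countable :=
        this.mono fun x hx => mem_K.1 hx
      exact h2.to_subtype
    have h3 : Countable ℝ :=
      (Module.finBasis K ℝ).equivFun.toEquiv.injective.countable
    exact Cardinal.not_countable_real (countable_univ)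
  let B := Module.Basis.ofVectorSpace K (ℝ ⧸ Q1)
  have hinf : Infinite (Module.Basis.ofVectorSpaceIndex K (ℝ ⧸ Q1)) := by
    by_contra hfin
    rw [not_infinite_iff_finite] at hfin
    exact hnf (Module.Finite.of_basis B)
  let g : Fin k → Module.Basis.ofVectorSpaceIndex K (ℝ ⧸ Q1) :=
    fun i => Infinite.natEmbedding _ (i : ℕ)
  have hgi : Function.Injective g := fun i j h => Fin.ext ((Infinite.natEmbedding _).injective h)
  have hB := B.linearIndependent.comp g hgi
  have hsur : ∀ i, ∃ x : ℝ, Q1.mkQ x = B (g i) := fun i => Submodule.mkQ_surjective _ _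
  choose e he using hsur
  refine ⟨e, ?_⟩
  have : (fun i => Q1.mkQ (e i)) = B ∘ g := funext he
  rw [this]
  exact hB

lemma indep_scale {k : ℕ} {e : Fin k → ℝ} (he : LinearIndependent K (fun i => Q1.mkQ (e i)))
    (r : Fin k → ℚ) (hr : ∀ i, r i ≠ 0) :
    LinearIndependent K (fun i => Q1.mkQ ((r i : ℝ) * e i)) := by
  have := he.units_smul (fun i => Units.mk0 ((r i : ℚ) : K) (by exact_mod_cast hr i))
  convert this using 1
  funext i
  simp only [Pi.smul_apply', Units.smul_mk0]
  rw [← map_smul]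
  congr 1

lemma dense_scale {e : ℝ} (he : e ≠ 0) : Dense {x : ℝ | ∃ r : ℚ, r ≠ 0 ∧ x = r * e} := by
  have h1 : Dense {x : ℝ | ∃ r : ℚ, x = r * e} := by
    have h := Rat.denseRange_cast (𝕜 := ℝ)
    have h2 := (Homeomorph.mulRight₀ e he).surjective.denseRange.comp h
      (Homeomorph.mulRight₀ e he).continuous
    refine Dense.mono ?_ h2
    rintro _ ⟨r, rfl⟩
    exact ⟨r, rfl⟩
  refine Dense.mono ?_ (h1.sdiff_singleton 0)
  rintro x ⟨⟨r, rfl⟩, hx⟩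
  refine ⟨r, ?_, rfl⟩
  rintro rfl
  simp at hx

section dens

variable {k : ℕ} (z j : Fin k)

noncomputable def oth : Finset (Fin k) := (Finset.univ.erase z).erase j

lemma sum_split (hzj : j ≠ z) (g : Fin k → ℝ) : ∑ i, g i = g z + (g j + ∑ i ∈ oth z j, g i) := by
  unfold oth
  rw [Finset.add_sum_erase _ _ (Finset.mem_erase.2 ⟨hzj, Finset.mem_univ _⟩),
    Finset.add_sum_erase _ _ (Finset.mem_univ _)]

lemma mem_oth {i : Fin k} : i ∈ oth z j ↔ i ≠ j ∧ i ≠ z := by simp [oth]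

noncomputable def wP (w : Fin k → ℝ) (i : Fin k) : ℝ := if i = z then -1 else max (w i) (-1)

noncomputable def lJ (w t : Fin k → ℝ) : ℝ :=
  (1 - ∑ i ∈ oth z j, t i - ∑ i ∈ oth z j, wP z w i * t i) / (1 + wP z w j)

noncomputable def lP (w t : Fin k → ℝ) (i : Fin k) : ℝ :=
  if i = z then 1 - ∑ i ∈ oth z j, t i - lJ z j w t else if i = j then lJ z j w t else t i

lemma lP_oth {w t : Fin k → ℝ} {g : Fin k → ℝ} :
    ∑ i ∈ oth z j, g i * lP z j w t i = ∑ i ∈ oth z j, g i * t i := by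
  refine Finset.sum_congr rfl fun i hi => ?_
  have := (mem_oth z j).1 hi
  simp [lP, this.1, this.2]

lemma lP_sums (hzj : j ≠ z) {w t : Fin k → ℝ} (h : 1 + wP z w j ≠ 0) :
    ∑ i, lP z j w t i = 1 ∧ ∑ i, wP z w i * lP z j w t i = 0 := by
  have h1 := lP_oth z j (w := w) (t := t) (g := fun _ => 1)
  have h2 := lP_oth z j (w := w) (t := t) (g := wP z w)
  simp only [one_mul] at h1
  have hz : lP z j w t z = 1 - ∑ i ∈ oth z j, t i - lJ z j w t := by simp [lP]
  have hj : lP z j w t j = lJ z j w t := by simp [lP, hzj]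
  have hwz : wP z w z = -1 := by simp [wP]
  constructor
  · rw [sum_split z j hzj, h1, hz, hj]; ring
  · rw [sum_split z j hzj, h2, hz, hj, hwz]
    have : lJ z j w t * (1 + wP z w j) =
      (1 - ∑ i ∈ oth z j, t i - ∑ i ∈ oth z j, wP z w i * t i) := by
      unfold lJ; field_simp
    linarith

lemma wP_self {w : Fin k → ℝ} (hz : w z = -1) (hw : ∀ i, -1 ≤ w i) : wP z w = w := by
  funext i
  unfold wP
  split_ifs with h
  · rw [h, hz]
  · exact max_eq_left (hw i)

lemma lP_self (hzj : j ≠ z) {w l : Fin k → ℝ} (hz : w z = -1) (hw : ∀ i, -1 ≤ w i)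
    (hj : 1 + w j ≠ 0) (h1 : ∑ i, l i = 1) (h2 : ∑ i, w i * l i = 0) : lP z j w l = l := by
  rw [sum_split z j hzj] at h1 h2
  rw [hz] at h2
  have hJ : lJ z j w l = l j := by
    unfold lJ
    rw [wP_self z hz hw, div_eq_iff hj]
    linarith
  funext i
  unfold lP
  rw [hJ]
  split_ifs with h h'
  · rw [h]; linarith
  · rw [h']
  · rfl

lemma continuous_wP : Continuous (wP z) := by
  refine continuous_pi fun i => ?_
  unfold wP
  split_ifs <;> fun_prop

lemma continuousAt_lP {w l : Fin k → ℝ} (h : 1 + wP z w j ≠ 0) :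
    ContinuousAt (fun x : (Fin k → ℝ) × (Fin k → ℝ) => lP z j x.1 x.2) (w, l) := by
  have hw : ∀ i, Continuous fun x : (Fin k → ℝ) × (Fin k → ℝ) => wP z x.1 i := fun i =>
    (continuous_apply i).comp ((continuous_wP z).comp continuous_fst)
  have hJ : ContinuousAt (fun x : (Fin k → ℝ) × (Fin k → ℝ) => lJ z j x.1 x.2) (w, l) := by
    unfold lJ
    refine ContinuousAt.div ?_ ?_ h
    · apply Continuous.continuousAt
      fun_prop
    · apply Continuous.continuousAt
      fun_prop
  refine continuousAt_pi.2 fun i => ?_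
  unfold lP
  split_ifs
  · refine ContinuousAt.sub ?_ hJ
    apply Continuous.continuousAt
    fun_prop
  · exact hJ
  · apply Continuous.continuousAt
    fun_prop

end dens

lemma dense_noPinch (k : ℕ) (hk : 3 ≤ k) : Dense (noPinchSet k) := by
  rintro ⟨⟨w0, l0⟩, hT⟩
  rw [mem_closure_iff_nhds]
  intro U hU
  obtain ⟨U', hU', hUU⟩ := (mem_nhds_induced _ _ _).1 hU
  have hk0 : 0 < k := by omega
  obtain ⟨hl, hl1, hw, hwz, hadj, hwl⟩ := id hT
  replace hwz := hwz hk0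
  simp only at hl hl1 hw hwz hadj hwl
  obtain ⟨z, hzdef⟩ : ∃ z : Fin k, z = ⟨0, hk0⟩ := ⟨_, rfl⟩
  rw [← hzdef] at hwz
  obtain ⟨j, hj⟩ : ∃ j, 0 < w0 j := by
    by_contra hcon
    push Not at hcon
    have : ∑ i, w0 i * l0 i < ∑ i : Fin k, (0 : ℝ) := by
      refine Finset.sum_lt_sum (fun i _ => ?_) ⟨z, Finset.mem_univ _, ?_⟩
      · exact mul_nonpos_of_nonpos_of_nonneg (hcon i) (hl i).le
      · rw [hwz]; linarith [hl z]
    rw [hwl] at this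
    simp at this
  have hzj : j ≠ z := by
    rintro rfl
    linarith
  have hws := wP_self z hwz hw
  have hls := lP_self z j hzj hwz hw (by linarith : (1 : ℝ) + w0 j ≠ 0) hl1 hwl
  have hcl := continuousAt_lP z j (w := w0) (l := l0) (by rw [hws]; positivity)
  have hcw : ContinuousAt (fun x : (Fin k → ℝ) × (Fin k → ℝ) => wP z x.1) (w0, l0) :=
    ((continuous_wP z).comp continuous_fst).continuousAt
  have e1 : ∀ᶠ x in 𝓝 (w0, l0), (wP z x.1, lP z j x.1 x.2) ∈ U' := by
    refine (hcw.prodMk hcl).eventually_mem ?_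
    simp only [hws, hls]
    exact hU'
  have e2 : ∀ᶠ x in 𝓝 (w0, l0), ∀ i, 0 < lP z j x.1 x.2 i := by
    rw [eventually_all]
    intro i
    have := (continuousAt_pi.1 hcl i)
    refine this.eventually_const_lt ?_
    simp only [hls]
    exact hl i
  have e3 : ∀ᶠ x in 𝓝 (w0, l0), ∀ i : Fin k,
      wP z x.1 i ≠ wP z x.1 ⟨((i : ℕ) + 1) % k, Nat.mod_lt _ i.pos⟩ := by
    rw [eventually_all]
    intro i
    refine (((continuousAt_pi.1 hcw i).sub (continuousAt_pi.1 hcw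
      ⟨((i : ℕ) + 1) % k, Nat.mod_lt _ i.pos⟩)).eventually_ne (y := 0) ?_).mono
      fun _ h => sub_ne_zero.1 h
    change wP z w0 i - wP z w0 _ ≠ 0
    rw [hws]
    exact sub_ne_zero.2 (hadj i)
  have e4 : ∀ᶠ x in 𝓝 (w0, l0), 0 < 1 + wP z x.1 j := by
    have := (continuousAt_pi.1 hcw j).const_add 1
    refine this.eventually_const_lt ?_
    simp only [hws]
    linarith
  obtain ⟨e, he⟩ := exists_indep k
  have he0 : ∀ i, e i ≠ 0 := by
    intro i h
    apply he.ne_zero i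
    simp [h]
  have hD : Dense ((univ.pi fun _ : Fin k => range ((↑) : ℚ → ℝ)) ×ˢ
      (univ.pi fun i : Fin k => {x : ℝ | ∃ r : ℚ, r ≠ 0 ∧ x = r * e i})) :=
    Dense.prod (dense_pi _ fun i _ => Rat.denseRange_cast) (dense_pi _ fun i _ => dense_scale (he0 i))
  obtain ⟨⟨w, t⟩, ⟨hwD, htD⟩, h1, h2, h3, h4⟩ :=
    (mem_closure_iff_frequently.1 (hD (w0, l0))).and_eventually
      (e1.and (e2.and (e3.and e4))) |>.exists
  replace hwD : ∀ i, ∃ c : ℚ, (c : ℝ) = w i := fun i => hwD i (mem_univ i)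
  replace htD : ∀ i, ∃ r : ℚ, r ≠ 0 ∧ t i = r * e i := fun i => htD i (mem_univ i)
  simp only at h1 h2 h3 h4
  choose r hr0 hr using htD
  obtain ⟨s1, s2⟩ := lP_sums z j hzj (w := w) (t := t) h4.ne'
  have hT' : TPL k (wP z w) (lP z j w t) := by
    refine ⟨h2, s1, ?_, ?_, h3, s2⟩
    · intro i
      unfold wP
      split_ifs
      · exact le_rfl
      · exact le_max_right _ _
    · intro h
      simp [wP, hzdef]
  refine ⟨⟨(wP z w, lP z j w t), hT'⟩, hUU h1, ?_⟩
  intro p q hq hg b hb ω hf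
  refine noPinch_of_good hk hT' ?_ j ?_ p q hq hg b ω hb.1.ne' (fun y => congrFun hf y)
  · intro i
    unfold wP
    split_ifs
    · exact ⟨-1, by simp⟩
    · obtain ⟨c, hc⟩ := hwD i
      refine ⟨max c (-1), ?_⟩
      rw [← hc]; push_cast; rfl
  · have h5 := (indep_scale he r hr0).comp
      (fun i : {i : Fin k // i ≠ ⟨0, hk0⟩ ∧ i ≠ j} => (i : Fin k)) Subtype.val_injective
    convert h5 using 1
    funext i
    have hi1 : (i : Fin k) ≠ z := fun h => i.2.1 (h.trans hzdef)
    have hi2 := i.2.2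
    simp [lP, hi1, hi2, hr]

end PL

/-- Genericity of no pinching for PL forcings with `k > 2` break points: the set
of `(w, ℓ) ∈ T̄^PL_k` whose family has no pinched rational tongue is a dense
`Gδ` in `T̄^PL_k` with the subspace topology from `ℝ^k × ℝ^k`. -/
theorem stmt14 (k : ℕ) (hk : 3 ≤ k) :
    Dense (noPinchSet k) ∧ IsGδ (noPinchSet k) := by
  exact ⟨PL.dense_noPinch k hk, PL.isGδ_noPinch k⟩
end

section
/- Let g : ℝ → ℝ be a lift of a piecewise linear degree-one circle homeomorphism with k ≥ 2 break points 0 = t_1 < … < t_k < 1 and slopes s_1, …, s_k, let p, q be coprime integers with q ≥ 1, and suppose the translation number of g equals p/q. Then the q-th iterate of g equals the translation x ↦ x + p if and only if for every i ∈ {1,…,k}: g^[q](t_i) = t_i + p, and there exist j_u, j_d ∈ {0,…,q−1} and indices u, d ∈ {1,…,k} with g^[j_u](t_i) − t_u ∈ ℤ and g^[j_d](t_i) − t_d ∈ ℤ, where t_u is a break point of type up and t_d is a break point of type down; i.e., every break point of g lies on a p/q-periodic orbit that contains break points of both types. -/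
/-- The right endpoint of the interval of definition starting at the break point
`t_i`: the next break point, or `t_1 + 1` for the last interval. -/
noncomputable def nextPt {k : ℕ} (t : Fin k → ℝ) (i : Fin k) : ℝ :=
  if h : (i : ℕ) + 1 < k then t ⟨(i : ℕ) + 1, h⟩ else t ⟨0, i.pos⟩ + 1

/-- The index preceding `i` mod `k`. -/
def prevIdx {k : ℕ} (i : Fin k) : Fin k :=
  ⟨((i : ℕ) + k - 1) % k, Nat.mod_lt _ i.pos⟩

lemma aux_idx {k : ℕ} (hk : 0 < k) (t : Fin k → ℝ) (ht0 : t ⟨0, hk⟩ = 0)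
    (z : ℝ) (h0 : 0 ≤ z) (h1 : z < 1) : ∃ i, t i ≤ z ∧ z < nextPt t i := by
  obtain ⟨i, hi, hmax⟩ := Finset.exists_max_image
    (Finset.univ.filter (fun i : Fin k => t i ≤ z)) id ⟨⟨0, hk⟩, by simp [ht0, h0]⟩
  simp only [Finset.mem_filter, Finset.mem_univ, true_and, id] at hi hmax
  refine ⟨i, hi, ?_⟩
  unfold nextPt
  split_ifs with h
  · by_contra hc
    have := hmax _ (not_lt.mp hc)
    rw [Fin.le_def] at this
    simp at this
  · rw [ht0]; linarith

lemma aux_int {g : ℝ → ℝ} (hdeg : ∀ x, g (x + 1) = g x + 1) (n : ℤ) :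
    ∀ x, g (x + n) = g x + n := by
  have hsub : ∀ x, g (x - 1) = g x - 1 := by
    intro x
    have := hdeg (x - 1)
    rw [sub_add_cancel] at this
    linarith
  induction n using Int.induction_on with
  | zero => simp
  | succ i ih =>
    intro x
    push_cast at ih ⊢
    rw [← add_assoc, hdeg, ih]; ring
  | pred i ih =>
    intro x
    push_cast at ih ⊢
    rw [← add_sub_assoc, hsub, ih]; ring

lemma aux_int_iter {g : ℝ → ℝ} (hdeg : ∀ x, g (x + 1) = g x + 1) (n : ℤ) (j : ℕ) :
    ∀ x, g^[j] (x + n) = g^[j] x + n := by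
  induction j with
  | zero => simp
  | succ j ih => intro x; rw [Function.iterate_succ_apply', Function.iterate_succ_apply', ih,
      aux_int hdeg]

lemma aux_affine {k : ℕ} (hk : 0 < k) {g : ℝ → ℝ}
    (hdeg : ∀ x, g (x + 1) = g x + 1) (t s : Fin k → ℝ) (ht0 : t ⟨0, hk⟩ = 0)
    (haff : ∀ i : Fin k, ∀ x ∈ Set.Icc (t i) (nextPt t i),
      g x = g (t i) + s i * (x - t i)) (a b : ℝ)
    (hno : ∀ i : Fin k, ∀ n : ℤ, ¬ (a < t i + n ∧ t i + n < b)) :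
    ∃ c d, ∀ x ∈ Set.Icc a b, g x = c * x + d := by
  obtain ⟨i, hi1, hi2⟩ := aux_idx hk t ht0 (Int.fract a) (Int.fract_nonneg a) (Int.fract_lt_one a)
  have hfl := Int.floor_add_fract a
  have hb : b - ⌊a⌋ ≤ nextPt t i := by
    unfold nextPt at hi2 ⊢
    split_ifs at hi2 ⊢ with h
    · have := hno ⟨i + 1, h⟩ ⌊a⌋
      by_contra hc
      exact this ⟨by linarith, by linarith⟩
    · have := hno ⟨0, i.pos⟩ (⌊a⌋ + 1)
      by_contra hc
      push_cast at this
      exact this ⟨by linarith, by linarith⟩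
  refine ⟨s i, g (t i) - s i * (⌊a⌋ + t i) + ⌊a⌋, fun x hx => ?_⟩
  have h1 := haff i (x - ⌊a⌋) ⟨by linarith [hx.1], by linarith [hx.2]⟩
  have h2 := aux_int hdeg ⌊a⌋ (x - ⌊a⌋)
  rw [sub_add_cancel] at h2
  rw [h2, h1]; ring

lemma aux_back {k : ℕ} (hk : 0 < k) {g : ℝ → ℝ} (hcont : Continuous g) (hmono : StrictMono g)
    (hdeg : ∀ x, g (x + 1) = g x + 1) (t s : Fin k → ℝ) (ht0 : t ⟨0, hk⟩ = 0)
    (haff : ∀ i : Fin k, ∀ x ∈ Set.Icc (t i) (nextPt t i),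
      g x = g (t i) + s i * (x - t i)) (p : ℤ) (q : ℕ)
    (hfix : ∀ i, g^[q] (t i) = t i + p) (x : ℝ) : g^[q] x = x + p := by
  by_contra hx
  have hcj : ∀ j, Continuous g^[j] := fun j => hcont.iterate j
  have hmj : ∀ j, StrictMono g^[j] := fun j => hmono.iterate j
  have hbr : ∀ i (n : ℤ), g^[q] (t i + n) = t i + n + p := by
    intro i n; rw [aux_int_iter hdeg, hfix]; ring
  set F : Set ℝ := {y | g^[q] y = y + p} with hF
  have hFc : IsClosed F := isClosed_eq (hcj q) (by fun_prop)
  have hint : ∀ n : ℤ, (n : ℝ) ∈ F := by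
    intro n
    have := hbr ⟨0, hk⟩ n
    rw [ht0, zero_add] at this
    exact this
  -- the gap
  obtain ⟨a, ⟨haF, hax⟩, hamax⟩ : ∃ a, (a ∈ F ∧ a ≤ x) ∧ ∀ y ∈ F, y ≤ x → y ≤ a := by
    have hne : (F ∩ Set.Iic x).Nonempty := ⟨⌊x⌋, hint _, Int.floor_le x⟩
    have hbd : BddAbove (F ∩ Set.Iic x) := ⟨x, fun y hy => hy.2⟩
    exact ⟨_, (hFc.inter isClosed_Iic).csSup_mem hne hbd, fun y h1 h2 => le_csSup hbd ⟨h1, h2⟩⟩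
  obtain ⟨b, ⟨hbF, hbx⟩, hbmin⟩ : ∃ b, (b ∈ F ∧ x ≤ b) ∧ ∀ y ∈ F, x ≤ y → b ≤ y := by
    have hne : (F ∩ Set.Ici x).Nonempty := ⟨⌈x⌉, hint _, Int.le_ceil x⟩
    have hbd : BddBelow (F ∩ Set.Ici x) := ⟨x, fun y hy => hy.2⟩
    exact ⟨_, (hFc.inter isClosed_Ici).csInf_mem hne hbd, fun y h1 h2 => csInf_le hbd ⟨h1, h2⟩⟩
  have hax' : a < x := lt_of_le_of_ne hax (by rintro rfl; exact hx haF)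
  have hab : a < b := hax'.trans_le hbx
  have hgap : ∀ y, a < y → y < b → y ∉ F := by
    intro y h1 h2 hy
    rcases le_total y x with h | h
    · exact absurd (hamax y hy h) (not_le.mpr h1)
    · exact absurd (hbmin y hy h) (not_le.mpr h2)
  have haffj : ∀ j, ∃ c d, ∀ y ∈ Set.Icc a b, g^[j] y = c * y + d := by
    intro j
    induction j with
    | zero => exact ⟨1, 0, by simp⟩
    | succ j ih =>
      obtain ⟨c, d, hcd⟩ := ih
      obtain ⟨c', d', hcd'⟩ := aux_affine hk hdeg t s ht0 haff (g^[j] a) (g^[j] b) (by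
        rintro i n ⟨h1, h2⟩
        obtain ⟨y, hy, hyeq⟩ := intermediate_value_Ioo hab.le (hcj j).continuousOn
          (show t i + n ∈ Set.Ioo (g^[j] a) (g^[j] b) from ⟨h1, h2⟩)
        apply hgap y hy.1 hy.2
        apply (hmj j).injective
        rw [aux_int_iter hdeg, hyeq, ← hbr, ← hyeq, ← Function.iterate_add_apply,
          ← Function.iterate_add_apply, add_comm])
      refine ⟨c' * c, c' * d + d', fun y hy => ?_⟩
      rw [Function.iterate_succ_apply', hcd' _ ⟨(hmj j).monotone hy.1, (hmj j).monotone hy.2⟩,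
        hcd y hy]
      ring
  obtain ⟨c, d, hcd⟩ := haffj q
  have e1 := hcd a ⟨le_rfl, hab.le⟩
  have e2 := hcd b ⟨hab.le, le_rfl⟩
  have e3 := hcd x ⟨hax, hbx⟩
  have f1 : g^[q] a = a + p := haF
  have f2 : g^[q] b = b + p := hbF
  have : (c - 1) * (b - a) = 0 := by linarith
  rcases mul_eq_zero.mp this with h | h
  · have hc : c = 1 := by linarith
    subst hc
    exact hx (by linarith)
  · linarith

lemma aux_shift {g : ℝ → ℝ} (hdeg : ∀ x, g (x + 1) = g x + 1) (n : ℤ) (c z : ℝ) (S S' : Set ℝ)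
    (hS : ∀ x ∈ S', x - n ∈ S) (h : HasDerivWithinAt g c S z) :
    HasDerivWithinAt g c S' (z + n) := by
  have h1 : HasDerivWithinAt (fun x : ℝ => x - n) 1 S' (z + n) :=
    ((hasDerivAt_id _).sub_const _).hasDerivWithinAt
  have h2 : HasDerivWithinAt g c S (z + n - n) := by simpa using h
  have h3 := (h2.comp (z + n) h1 hS).add_const (n : ℝ)
  rw [mul_one] at h3
  refine h3.congr_of_eventuallyEq (Filter.Eventually.of_forall fun x => ?_) ?_
  · have := aux_int hdeg n (x - n)
    rw [sub_add_cancel] at this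
    simpa using this
  · have := aux_int hdeg n z
    simpa using this

lemma aux_right {k : ℕ} {g : ℝ → ℝ} (t s : Fin k → ℝ)
    (haff : ∀ i : Fin k, ∀ x ∈ Set.Icc (t i) (nextPt t i),
      g x = g (t i) + s i * (x - t i)) (i : Fin k) (z : ℝ) (h1 : t i ≤ z) (h2 : z < nextPt t i) :
    HasDerivWithinAt g (s i) (Set.Ici z) z := by
  have hl : HasDerivWithinAt (fun x => g (t i) + s i * (x - t i)) (s i) (Set.Ici z) z := by
    have := (((hasDerivAt_id z).sub_const (t i)).const_mul (s i)).const_add (g (t i))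
    simpa using this.hasDerivWithinAt
  refine hl.congr_of_eventuallyEq ?_ (haff i z ⟨h1, h2.le⟩)
  filter_upwards [self_mem_nhdsWithin, mem_nhdsWithin_of_mem_nhds (Iio_mem_nhds h2)] with x hx hx'
  exact haff i x ⟨h1.trans hx, le_of_lt hx'⟩

lemma aux_left {k : ℕ} {g : ℝ → ℝ} (t s : Fin k → ℝ)
    (haff : ∀ i : Fin k, ∀ x ∈ Set.Icc (t i) (nextPt t i),
      g x = g (t i) + s i * (x - t i)) (i : Fin k) (z : ℝ) (h1 : t i < z) (h2 : z ≤ nextPt t i) :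
    HasDerivWithinAt g (s i) (Set.Iic z) z := by
  have hl : HasDerivWithinAt (fun x => g (t i) + s i * (x - t i)) (s i) (Set.Iic z) z := by
    have := (((hasDerivAt_id z).sub_const (t i)).const_mul (s i)).const_add (g (t i))
    simpa using this.hasDerivWithinAt
  refine hl.congr_of_eventuallyEq ?_ (haff i z ⟨h1.le, h2⟩)
  filter_upwards [self_mem_nhdsWithin, mem_nhdsWithin_of_mem_nhds (Ioi_mem_nhds h1)] with x hx hx'
  exact haff i x ⟨le_of_lt hx', le_trans hx h2⟩

lemma aux_next_gt {k : ℕ} (t : Fin k → ℝ) (htmono : StrictMono t) 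
    (h0 : ∀ i : Fin k, t i < t ⟨0, i.pos⟩ + 1) (i : Fin k) : t i < nextPt t i := by
  unfold nextPt
  split_ifs with h
  · exact htmono (by rw [Fin.lt_def]; simp)
  · exact h0 i

lemma aux_prev {k : ℕ} (t : Fin k → ℝ) (i : Fin k) :
    ∃ n : ℤ, nextPt t (prevIdx i) = t i + n := by
  obtain ⟨i, hi⟩ := i
  rcases Nat.eq_zero_or_pos i with rfl | h
  · refine ⟨1, ?_⟩
    have : (0 + k - 1) % k = k - 1 := by rw [zero_add]; exact Nat.mod_eq_of_lt (by omega)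
    unfold nextPt prevIdx
    rw [dif_neg]
    · simp
    · simp only [this]; omega
  · refine ⟨0, ?_⟩
    have : (i + k - 1) % k = i - 1 := by
      rw [show i + k - 1 = i - 1 + k by omega, Nat.add_mod_right]
      exact Nat.mod_eq_of_lt (by omega)
    unfold nextPt prevIdx
    rw [dif_pos (by simp only [this]; omega)]
    simp only [this, Int.cast_zero, add_zero]
    congr 2; omega

lemma aux_prev_ne {k : ℕ} (s : Fin k → ℝ)
    (hsne : ∀ i : Fin k, s i ≠ s ⟨((i : ℕ) + 1) % k, Nat.mod_lt _ i.pos⟩) (i : Fin k) :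
    s (prevIdx i) ≠ s i := by
  have h := hsne (prevIdx i)
  have e : (⟨((prevIdx i : ℕ) + 1) % k, Nat.mod_lt _ i.pos⟩ : Fin k) = i := by
    ext
    have := i.isLt
    simp only [prevIdx, Nat.mod_add_mod]
    rw [show (i : ℕ) + k - 1 + 1 = i + k by omega, Nat.add_mod_right]
    exact Nat.mod_eq_of_lt this
  rwa [e] at h

lemma aux_break {k : ℕ} (hk : 0 < k) {g : ℝ → ℝ}
    (hdeg : ∀ x, g (x + 1) = g x + 1) (t s : Fin k → ℝ) (ht0 : t ⟨0, hk⟩ = 0)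
    (htmono : StrictMono t) (ht1 : ∀ i, t i < 1)
    (haff : ∀ i : Fin k, ∀ x ∈ Set.Icc (t i) (nextPt t i),
      g x = g (t i) + s i * (x - t i)) (i : Fin k) (n : ℤ) :
    HasDerivWithinAt g (s (prevIdx i)) (Set.Iic (t i + n)) (t i + n) ∧
    HasDerivWithinAt g (s i) (Set.Ici (t i + n)) (t i + n) := by
  have h0 : ∀ i : Fin k, t i < t ⟨0, i.pos⟩ + 1 := by intro i; rw [ht0]; linarith [ht1 i]
  constructor
  · obtain ⟨m, hm⟩ := aux_prev t i
    have h := aux_left t s haff (prevIdx i) _ (aux_next_gt t htmono h0 (prevIdx i)) le_rfl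
    rw [hm] at h
    have := aux_shift hdeg (n - m) _ _ _ (Set.Iic (t i + n)) (by
      intro x hx
      simp only [Set.mem_Iic] at hx ⊢
      push_cast; linarith) h
    rwa [show t i + m + ((n - m : ℤ) : ℝ) = t i + n by push_cast; ring] at this
  · exact aux_shift hdeg n _ _ _ (Set.Ici (t i + n)) (by
      intro x hx
      simp only [Set.mem_Ici] at hx ⊢
      linarith) (aux_right t s haff i _ le_rfl (aux_next_gt t htmono h0 i))

lemma aux_local {k : ℕ} (hk : 0 < k) {g : ℝ → ℝ}
    (hdeg : ∀ x, g (x + 1) = g x + 1) (t s : Fin k → ℝ) (ht0 : t ⟨0, hk⟩ = 0)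
    (htmono : StrictMono t) (ht1 : ∀ i, t i < 1) (hs : ∀ i, 0 < s i)
    (haff : ∀ i : Fin k, ∀ x ∈ Set.Icc (t i) (nextPt t i),
      g x = g (t i) + s i * (x - t i)) (y : ℝ) :
    ∃ L R, 0 < L ∧ 0 < R ∧ HasDerivWithinAt g L (Set.Iic y) y ∧
      HasDerivWithinAt g R (Set.Ici y) y ∧
      (L < R → ∃ u, s (prevIdx u) < s u ∧ ∃ m : ℤ, y - t u = m) ∧
      (R < L → ∃ u, s u < s (prevIdx u) ∧ ∃ m : ℤ, y - t u = m) := by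
  obtain ⟨i, hi1, hi2⟩ := aux_idx hk t ht0 (Int.fract y) (Int.fract_nonneg y) (Int.fract_lt_one y)
  have hfl := Int.floor_add_fract y
  rcases hi1.eq_or_lt with h | h
  · have hy : y = t i + ⌊y⌋ := by linarith
    obtain ⟨h1, h2⟩ := aux_break hk hdeg t s ht0 htmono ht1 haff i ⌊y⌋
    rw [← hy] at h1 h2
    exact ⟨_, _, hs _, hs _, h1, h2, fun hh => ⟨i, hh, ⌊y⌋, by linarith⟩,
      fun hh => ⟨i, hh, ⌊y⌋, by linarith⟩⟩
  · have hy : Int.fract y + ⌊y⌋ = y := by linarith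
    have h1 := aux_shift hdeg ⌊y⌋ _ _ _ (Set.Iic y) (by
      intro x hx
      simp only [Set.mem_Iic] at hx ⊢
      linarith) (aux_left t s haff i _ h hi2.le)
    have h2 := aux_shift hdeg ⌊y⌋ _ _ _ (Set.Ici y) (by
      intro x hx
      simp only [Set.mem_Ici] at hx ⊢
      linarith) (aux_right t s haff i _ hi1 hi2)
    rw [hy] at h1 h2
    exact ⟨_, _, hs i, hs i, h1, h2, fun hh => absurd hh (lt_irrefl _),
      fun hh => absurd hh (lt_irrefl _)⟩

lemma aux_forward {k : ℕ} (hk : 0 < k) {g : ℝ → ℝ} (hmono : StrictMono g)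
    (hdeg : ∀ x, g (x + 1) = g x + 1) (t s : Fin k → ℝ) (ht0 : t ⟨0, hk⟩ = 0)
    (htmono : StrictMono t) (ht1 : ∀ i, t i < 1) (hs : ∀ i, 0 < s i)
    (hsne : ∀ i : Fin k, s i ≠ s ⟨((i : ℕ) + 1) % k, Nat.mod_lt _ i.pos⟩)
    (haff : ∀ i : Fin k, ∀ x ∈ Set.Icc (t i) (nextPt t i),
      g x = g (t i) + s i * (x - t i)) (p : ℤ) (q : ℕ) (hq : 1 ≤ q)
    (hG : g^[q] = fun x => x + (p : ℝ)) (i : Fin k) :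
      (∃ (ju : ℕ) (u : Fin k), ju < q ∧ s (prevIdx u) < s u ∧
        ∃ mu : ℤ, g^[ju] (t i) - t u = (mu : ℝ)) ∧
      (∃ (jd : ℕ) (d : Fin k), jd < q ∧ s d < s (prevIdx d) ∧
        ∃ md : ℤ, g^[jd] (t i) - t d = (md : ℝ)) := by
  choose L R hL hR hdL hdR hup hdn using aux_local hk hdeg t s ht0 htmono ht1 hs haff
  have hmj : ∀ j, Monotone g^[j] := fun j => (hmono.iterate j).monotone
  have hLj : ∀ j, HasDerivWithinAt g^[j] (∏ m ∈ Finset.range j, L (g^[m] (t i)))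
      (Set.Iic (t i)) (t i) := by
    intro j
    induction j with
    | zero => simpa using hasDerivWithinAt_id (t i) (Set.Iic (t i))
    | succ j ih =>
      rw [Finset.prod_range_succ, mul_comm, Function.iterate_succ']
      exact (hdL _).comp _ ih (fun x hx => hmj j hx)
  have hRj : ∀ j, HasDerivWithinAt g^[j] (∏ m ∈ Finset.range j, R (g^[m] (t i)))
      (Set.Ici (t i)) (t i) := by
    intro j
    induction j with
    | zero => simpa using hasDerivWithinAt_id (t i) (Set.Ici (t i))
    | succ j ih =>
      rw [Finset.prod_range_succ, mul_comm, Function.iterate_succ']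
      exact (hdR _).comp _ ih (fun x hx => hmj j hx)
  have uL : ∀ y : ℝ, UniqueDiffWithinAt ℝ (Set.Iic y) y := fun y => uniqueDiffOn_Iic y y (by simp)
  have uR : ∀ y : ℝ, UniqueDiffWithinAt ℝ (Set.Ici y) y := fun y => uniqueDiffOn_Ici y y (by simp)
  have hone : ∀ S, HasDerivWithinAt g^[q] 1 S (t i) := by
    intro S
    rw [hG]
    exact ((hasDerivAt_id (t i)).add_const (p : ℝ)).hasDerivWithinAt
  have heL := (uL _).eq_deriv _ (hLj q) (hone _)
  have heR := (uR _).eq_deriv _ (hRj q) (hone _)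
  have hne : L (t i) ≠ R (t i) := by
    obtain ⟨h1, h2⟩ := aux_break hk hdeg t s ht0 htmono ht1 haff i 0
    simp only [Int.cast_zero, add_zero] at h1 h2
    rw [(uL _).eq_deriv _ (hdL (t i)) h1, (uR _).eq_deriv _ (hdR (t i)) h2]
    exact aux_prev_ne s hsne i
  constructor
  · by_contra hc
    have hle : ∀ j < q, R (g^[j] (t i)) ≤ L (g^[j] (t i)) := by
      intro j hj
      by_contra h
      obtain ⟨u, hu, m, hm⟩ := hup _ (not_le.mp h)
      exact hc ⟨j, u, hj, hu, m, hm⟩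
    have := Finset.prod_lt_prod (s := Finset.range q) (f := fun m => R (g^[m] (t i)))
      (g := fun m => L (g^[m] (t i))) (fun m _ => hR _) (fun m hm => hle m (Finset.mem_range.mp hm))
      ⟨0, Finset.mem_range.mpr hq, lt_of_le_of_ne (hle 0 hq) hne.symm⟩
    linarith
  · by_contra hc
    have hle : ∀ j < q, L (g^[j] (t i)) ≤ R (g^[j] (t i)) := by
      intro j hj
      by_contra h
      obtain ⟨u, hu, m, hm⟩ := hdn _ (not_le.mp h)
      exact hc ⟨j, u, hj, hu, m, hm⟩
    have := Finset.prod_lt_prod (s := Finset.range q) (f := fun m => L (g^[m] (t i)))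
      (g := fun m => R (g^[m] (t i))) (fun m _ => hL _) (fun m hm => hle m (Finset.mem_range.mp hm))
      ⟨0, Finset.mem_range.mpr hq, lt_of_le_of_ne (hle 0 hq) hne⟩
    linarith

/-- Characterization of pinch points for PL circle homeomorphisms: if `g` is a
lift of a PL degree-one circle homeomorphism with `k ≥ 2` break points
`0 = t_1 < ⋯ < t_k < 1`, slopes `s_i`, and translation number `p/q` (`p, q`
coprime, `q ≥ 1`), then `g^[q]` is the translation by `p` iff every break point
lies on a `p/q`-periodic orbit that contains a break point of type up and a
break point of type down. -/
theorem stmt15 (k : ℕ) (hk : 2 ≤ k) (g : ℝ → ℝ) (hcont : Continuous g)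
    (hmono : StrictMono g) (hdeg : ∀ x, g (x + 1) = g x + 1)
    (t s : Fin k → ℝ)
    (ht0 : t ⟨0, by omega⟩ = 0) (htmono : StrictMono t) (ht1 : ∀ i, t i < 1)
    (hs : ∀ i, 0 < s i)
    (hsne : ∀ i : Fin k, s i ≠ s ⟨((i : ℕ) + 1) % k, Nat.mod_lt _ i.pos⟩)
    (haff : ∀ i : Fin k, ∀ x ∈ Set.Icc (t i) (nextPt t i),
      g x = g (t i) + s i * (x - t i))
    (p : ℤ) (q : ℕ) (hq : 1 ≤ q) (hpq : Int.gcd p q = 1)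
    (hrot : Filter.Tendsto (fun m : ℕ => g^[m] 0 / m) Filter.atTop
      (nhds ((p : ℝ) / q))) :
    (g^[q] = fun x => x + (p : ℝ)) ↔
    ∀ i : Fin k,
      g^[q] (t i) = t i + (p : ℝ) ∧
      (∃ (ju : ℕ) (u : Fin k), ju < q ∧ s (prevIdx u) < s u ∧
        ∃ mu : ℤ, g^[ju] (t i) - t u = (mu : ℝ)) ∧
      (∃ (jd : ℕ) (d : Fin k), jd < q ∧ s d < s (prevIdx d) ∧
        ∃ md : ℤ, g^[jd] (t i) - t d = (md : ℝ)) := by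
  constructor
  · intro hG i
    exact ⟨by rw [hG], aux_forward (by omega) hmono hdeg t s ht0 htmono ht1 hs hsne haff p q hq hG i⟩
  · intro h
    funext x
    exact aux_back (by omega) hcont hmono hdeg t s ht0 haff p q (fun i => (h i).1) x
end

section
/- Let f : ℝ → ℝ be Lipschitz and suppose the set {x ∈ ℝ : f is differentiable at x and deriv f x = 0} has positive Lebesgue measure. Then for every integer p and every integer q ≥ 1, the q-th iterate of f is not equal to the translation x ↦ x + p. -/
open MeasureTheory

/-- If a Lipschitz map `f : ℝ → ℝ` has derivative zero on a set of positive
Lebesgue measure, then no iterate of `f` is an integer translation. -/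
theorem stmt19 (f : ℝ → ℝ) (hL : ∃ K, LipschitzWith K f)
    (hpos : 0 < volume {x : ℝ | DifferentiableAt ℝ f x ∧ deriv f x = 0}) :
    ∀ (p : ℤ) (q : ℕ), 1 ≤ q → f^[q] ≠ fun x => x + (p : ℝ) := by
  intro p q hq heq
  obtain ⟨K, hK⟩ := hL
  obtain ⟨x, hx, hx0⟩ := nonempty_of_measure_ne_zero hpos.ne'
  obtain ⟨n, rfl⟩ : ∃ n, q = n + 1 := ⟨q - 1, by omega⟩
  have hf : HasDerivAt f 0 x := hx0 ▸ hx.hasDerivAt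
  have hg := hK.iterate n
  have h0 : HasDerivAt (f^[n + 1]) 0 x := by
    rw [hasDerivAt_iff_isLittleO] at hf ⊢
    simp only [smul_zero, sub_zero] at hf ⊢
    refine Asymptotics.IsBigO.trans_isLittleO ?_ hf
    refine Asymptotics.IsBigO.of_bound ((K ^ n : NNReal) : ℝ) (Filter.Eventually.of_forall ?_)
    intro y
    rw [Function.iterate_succ_apply, Function.iterate_succ_apply, ← dist_eq_norm, ← dist_eq_norm]
    exact hg.dist_le_mul _ _
  rw [heq] at h0
  have h1 : HasDerivAt (fun x : ℝ => x + (p : ℝ)) 1 x := (hasDerivAt_id x).add_const _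
  exact zero_ne_one (h0.unique h1)
end
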